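/- arXiv:2005.04395 — 9 statements merged into one kernel-verified Lean document; each statement's English description precedes it below -/
import Mathlib

section
/- Let Λ = (Λ_n)_{n∈ℕ} be a g-frame for H with respect to K, with bounds A and B. Assume: (a) for every finitely supported family (g_n)_{n∈ℕ} in K, if ∑_n Λ_n* g_n = 0 then g_n = 0 for every n; and (b) the kernel of the synthesis operator is invariant under the right-shift, i.e. for every sequence (g_n)_{n∈ℕ} in K with ∑_n ‖g_n‖² < ∞, if the series ∑_n Λ_n* g_n converges to 0 then the series ∑_n Λ_{n+1}* g_n also converges to 0. Then there exists a bounded operator T : H → H with ‖T‖ ≤ √(B/A) such that Λ_n = Λ_0 ∘ Tⁿ for all n ∈ ℕ. -/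
/-- `Λ` is a g-frame for `H` with respect to `K`, with bounds `A` and `B`. -/
def IsGFrame {H K : Type*} [NormedAddCommGroup H] [InnerProductSpace ℂ H]
    [NormedAddCommGroup K] [InnerProductSpace ℂ K]
    (Λ : ℕ → H →L[ℂ] K) (A B : ℝ) : Prop :=
  0 < A ∧ A ≤ B ∧ ∀ f : H,
    Summable (fun n => ‖Λ n f‖ ^ 2) ∧
    A * ‖f‖ ^ 2 ≤ (∑' n, ‖Λ n f‖ ^ 2) ∧
    (∑' n, ‖Λ n f‖ ^ 2) ≤ B * ‖f‖ ^ 2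

/-! Let `θ f = (Λ_n f)_n` be the analysis operator. The lower frame bound makes its range closed,
hence equal to `(ker θ†)ᗮ`. Let `θ'` be the analysis operator of the shifted family `(Λ_{n+1})_n`.
As `θ†` and `θ'†` are the synthesis operators, shift invariance says `ker θ† ≤ ker θ'†`; thus
`range θ' ≤ range θ`, and `T = θ⁻¹ ∘ θ'` satisfies `Λ_n ∘ T = Λ_{n+1}`. -/

section Operators

variable {𝕜 E F G : Type*} [RCLike 𝕜]
  [NormedAddCommGroup E] [InnerProductSpace 𝕜 E] [CompleteSpace E]
  [NormedAddCommGroup F] [InnerProductSpace 𝕜 F] [CompleteSpace F]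
  [NormedAddCommGroup G] [InnerProductSpace 𝕜 G] [CompleteSpace G]

theorem range_le_topologicalClosure_range_of_ker_adjoint_le {U : E →L[𝕜] F} {V : G →L[𝕜] F}
    (hker : U.adjoint.ker ≤ V.adjoint.ker) : V.range ≤ U.range.topologicalClosure :=
  calc V.range ≤ V.rangeᗮᗮ := Submodule.le_orthogonal_orthogonal _
    _ ≤ U.rangeᗮᗮ := by
      simpa only [ContinuousLinearMap.orthogonal_range] using Submodule.orthogonal_le hker
    _ = U.range.topologicalClosure := Submodule.orthogonal_orthogonal_eq_closure _

theorem exists_comp_eq_of_ker_adjoint_le {U : E →L[𝕜] F} {V : G →L[𝕜] F} {c : NNReal}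
    (hU : AntilipschitzWith c U) (hker : U.adjoint.ker ≤ V.adjoint.ker) :
    ∃ T : G →L[𝕜] E, ‖T‖ ≤ c * ‖V‖ ∧ U ∘L T = V := by
  have hclosed : IsClosed (Set.range U) := hU.isClosed_range U.uniformContinuous
  have hrange (x : G) : V x ∈ U.range := by
    rw [← IsClosed.submodule_topologicalClosure_eq (s := U.range) hclosed]
    exact range_le_topologicalClosure_range_of_ker_adjoint_le hker (V.mem_range_self x)
  let e : E ≃L[𝕜] U.range := U.equivRange hU.injective hclosed
  let T : G →L[𝕜] E := e.symm ∘L V.codRestrict U.range hrange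
  have hUT (x : G) : U (T x) = V x := congrArg Subtype.val (e.apply_symm_apply ⟨V x, hrange x⟩)
  refine ⟨T, T.opNorm_le_bound (by positivity) fun x ↦ ?_, ContinuousLinearMap.ext hUT⟩
  calc ‖T x‖ ≤ c * ‖U (T x)‖ := U.bound_of_antilipschitz hU (T x)
    _ = c * ‖V x‖ := by rw [hUT]
    _ ≤ c * (‖V‖ * ‖x‖) := by gcongr; exact V.le_opNorm x
    _ = c * ‖V‖ * ‖x‖ := (mul_assoc _ _ _).symm

end Operators

theorem eq_comp_pow_of_comp_eq_succ {R M N : Type*} [Semiring R]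
    [TopologicalSpace M] [AddCommMonoid M] [Module R M]
    [TopologicalSpace N] [AddCommMonoid N] [Module R N]
    {Λ : ℕ → M →L[R] N} {T : M →L[R] M} (h : ∀ n, Λ n ∘L T = Λ (n + 1)) (n : ℕ) :
    Λ n = Λ 0 ∘L T ^ n := by
  induction n with
  | zero => rfl
  | succ n ih =>
    rw [← h, ih, pow_succ]
    rfl

section Bessel

variable {𝕜 ι κ H : Type*} {K : ι → Type*} [RCLike 𝕜]
  [NormedAddCommGroup H] [InnerProductSpace 𝕜 H]
  [∀ i, NormedAddCommGroup (K i)] [∀ i, InnerProductSpace 𝕜 (K i)]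

/-- The g-Bessel condition with bound `B`, i.e. the upper half of the g-frame condition. Summability
is demanded separately because `∑'` of a divergent series is `0`. -/
def IsGBessel (Λ : ∀ i, H →L[𝕜] K i) (B : ℝ) : Prop :=
  ∀ f : H, Summable (fun i ↦ ‖Λ i f‖ ^ 2) ∧ ∑' i, ‖Λ i f‖ ^ 2 ≤ B * ‖f‖ ^ 2

theorem memℓp_two_iff_summable_norm_sq {g : ∀ i, K i} :
    Memℓp g 2 ↔ Summable fun i ↦ ‖g i‖ ^ 2 := by
  simpa using memℓp_gen_iff (p := 2) (f := g) (by norm_num)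

theorem lp_two_norm_sq_eq_tsum (g : lp K 2) : ‖g‖ ^ 2 = ∑' i, ‖g i‖ ^ 2 := by
  simpa using lp.norm_rpow_eq_tsum (p := 2) (by norm_num) g

namespace IsGBessel

variable {Λ : ∀ i, H →L[𝕜] K i} {B : ℝ}

theorem comp_injective (hΛ : IsGBessel Λ B) {σ : κ → ι} (hσ : σ.Injective) :
    IsGBessel (fun j ↦ Λ (σ j)) B := fun f ↦
  ⟨(hΛ f).1.comp_injective hσ,
    (tsum_comp_le_tsum_of_inj (hΛ f).1 (fun _ ↦ sq_nonneg _) hσ).trans (hΛ f).2⟩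

/-- The analysis operator `f ↦ (Λ i f)ᵢ`, with values in the `ℓ²` direct sum of the `K i`. Its
adjoint is the synthesis operator `g ↦ ∑ i, (Λ i).adjoint (g i)`. -/
noncomputable def analysis (hΛ : IsGBessel Λ B) : H →L[𝕜] lp K 2 :=
  LinearMap.mkContinuous
    { toFun := fun f ↦ ⟨fun i ↦ Λ i f, memℓp_two_iff_summable_norm_sq.2 (hΛ f).1⟩
      map_add' := fun f g ↦ by ext i; exact map_add (Λ i) f g
      map_smul' := fun c f ↦ by ext i; exact map_smul (Λ i) c f }
    (√B) fun f ↦ by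
      rw [← Real.sqrt_sq (norm_nonneg f), ← Real.sqrt_mul' _ (sq_nonneg _)]
      refine Real.le_sqrt_of_sq_le ?_
      rw [lp_two_norm_sq_eq_tsum]
      exact (hΛ f).2

@[simp]
theorem analysis_apply (hΛ : IsGBessel Λ B) (f : H) (i : ι) : hΛ.analysis f i = Λ i f := rfl

theorem norm_analysis_le (hΛ : IsGBessel Λ B) : ‖hΛ.analysis‖ ≤ √B :=
  LinearMap.mkContinuous_norm_le _ (Real.sqrt_nonneg B) _

theorem norm_analysis_apply_sq (hΛ : IsGBessel Λ B) (f : H) :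
    ‖hΛ.analysis f‖ ^ 2 = ∑' i, ‖Λ i f‖ ^ 2 :=
  lp_two_norm_sq_eq_tsum _

theorem antilipschitzWith_analysis (hΛ : IsGBessel Λ B) {A : ℝ} (hA : 0 < A)
    (hlower : ∀ f, A * ‖f‖ ^ 2 ≤ ∑' i, ‖Λ i f‖ ^ 2) :
    AntilipschitzWith (√A)⁻¹.toNNReal hΛ.analysis := by
  refine hΛ.analysis.antilipschitz_of_bound fun f ↦ ?_
  have hbound : √A * ‖f‖ ≤ ‖hΛ.analysis f‖ := by
    refine le_of_sq_le_sq ?_ (norm_nonneg _)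
    rw [mul_pow, Real.sq_sqrt hA.le, norm_analysis_apply_sq]
    exact hlower f
  rwa [Real.coe_toNNReal _ (by positivity), le_inv_mul_iff₀ (Real.sqrt_pos.2 hA)]

variable [CompleteSpace H] [∀ i, CompleteSpace (K i)]

theorem adjoint_analysis_single [DecidableEq ι] (hΛ : IsGBessel Λ B) (i : ι) (x : K i) :
    hΛ.analysis.adjoint (lp.single 2 i x) = (Λ i).adjoint x :=
  ext_inner_left 𝕜 fun f ↦ by
    simp only [ContinuousLinearMap.adjoint_inner_right, lp.inner_single_right, analysis_apply]

theorem hasSum_adjoint_analysis (hΛ : IsGBessel Λ B) (g : lp K 2) :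
    HasSum (fun i ↦ (Λ i).adjoint (g i)) (hΛ.analysis.adjoint g) := by
  classical
  simpa only [adjoint_analysis_single] using
    (lp.hasSum_single ENNReal.ofNat_ne_top g).mapL hΛ.analysis.adjoint

theorem exists_comp_eq_of_synthesis_ker_le {G : Type*} [NormedAddCommGroup G]
    [InnerProductSpace 𝕜 G] [CompleteSpace G] {Γ : ∀ i, G →L[𝕜] K i} {A C : ℝ}
    (hΛ : IsGBessel Λ C) (hA : 0 < A) (hlower : ∀ f, A * ‖f‖ ^ 2 ≤ ∑' i, ‖Λ i f‖ ^ 2)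
    (hΓ : IsGBessel Γ B)
    (hker : ∀ g : ∀ i, K i, Summable (fun i ↦ ‖g i‖ ^ 2) →
      HasSum (fun i ↦ (Λ i).adjoint (g i)) 0 → HasSum (fun i ↦ (Γ i).adjoint (g i)) 0) :
    ∃ T : G →L[𝕜] H, ‖T‖ ≤ √(B / A) ∧ ∀ i, Λ i ∘L T = Γ i := by
  have hker' : hΛ.analysis.adjoint.ker ≤ hΓ.analysis.adjoint.ker := fun g hg ↦ by
    have hg0 : HasSum (fun i ↦ (Λ i).adjoint (g i)) 0 := by
      simpa only [show hΛ.analysis.adjoint g = 0 from hg] using hΛ.hasSum_adjoint_analysis g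
    have hg2 : Summable fun i ↦ ‖g i‖ ^ 2 := memℓp_two_iff_summable_norm_sq.1 (lp.memℓp g)
    exact (hΓ.hasSum_adjoint_analysis g).unique (hker _ hg2 hg0)
  obtain ⟨T, hT, hcomp⟩ :=
    exists_comp_eq_of_ker_adjoint_le (hΛ.antilipschitzWith_analysis hA hlower) hker'
  refine ⟨T, ?_, fun i ↦ ?_⟩
  · calc ‖T‖ ≤ (√A)⁻¹ * ‖hΓ.analysis‖ := by rwa [Real.coe_toNNReal _ (by positivity)] at hT
      _ ≤ (√A)⁻¹ * √B := by gcongr; exact hΓ.norm_analysis_le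
      _ = √(B / A) := by rw [Real.sqrt_div' _ hA.le, inv_mul_eq_div]
  · ext x
    exact congrArg (fun S : G →L[𝕜] lp K 2 ↦ S x i) hcomp

end IsGBessel

end Bessel

theorem IsGFrame.isGBessel {H K : Type*} [NormedAddCommGroup H] [InnerProductSpace ℂ H]
    [NormedAddCommGroup K] [InnerProductSpace ℂ K] {Λ : ℕ → H →L[ℂ] K} {A B : ℝ}
    (hΛ : IsGFrame Λ A B) : IsGBessel Λ B :=
  fun f ↦ ⟨(hΛ.2.2 f).1, (hΛ.2.2 f).2.2⟩

theorem stmt_0_general {𝕜 H K : Type*} [RCLike 𝕜]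
    [NormedAddCommGroup H] [InnerProductSpace 𝕜 H] [CompleteSpace H]
    [NormedAddCommGroup K] [InnerProductSpace 𝕜 K] [CompleteSpace K]
    {Λ : ℕ → H →L[𝕜] K} {A B : ℝ} (hA : 0 < A)
    (hlower : ∀ f, A * ‖f‖ ^ 2 ≤ ∑' n, ‖Λ n f‖ ^ 2) (hΛ : IsGBessel Λ B)
    (hshift : ∀ g : ℕ → K, Summable (fun n ↦ ‖g n‖ ^ 2) →
      HasSum (fun n ↦ (Λ n).adjoint (g n)) 0 → HasSum (fun n ↦ (Λ (n + 1)).adjoint (g n)) 0) :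
    ∃ T : H →L[𝕜] H, ‖T‖ ≤ √(B / A) ∧ ∀ n, Λ n = Λ 0 ∘L T ^ n := by
  obtain ⟨T, hT, hcomp⟩ := hΛ.exists_comp_eq_of_synthesis_ker_le hA hlower
    (hΛ.comp_injective (add_left_injective 1)) hshift
  exact ⟨T, hT, eq_comp_pow_of_comp_eq_succ hcomp⟩

theorem stmt_0 {H K : Type*} [NormedAddCommGroup H] [InnerProductSpace ℂ H]
    [CompleteSpace H] [TopologicalSpace.SeparableSpace H]
    [NormedAddCommGroup K] [InnerProductSpace ℂ K]
    [CompleteSpace K] [TopologicalSpace.SeparableSpace K]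
    (Λ : ℕ → H →L[ℂ] K) (A B : ℝ)
    (hframe : IsGFrame Λ A B)
    (hindep : ∀ (s : Finset ℕ) (g : ℕ → K),
      (∑ n ∈ s, (Λ n).adjoint (g n)) = 0 → ∀ n ∈ s, g n = 0)
    (hshift : ∀ g : ℕ → K, Summable (fun n => ‖g n‖ ^ 2) →
      HasSum (fun n => (Λ n).adjoint (g n)) 0 →
      HasSum (fun n => (Λ (n + 1)).adjoint (g n)) 0) :
    ∃ T : H →L[ℂ] H, ‖T‖ ≤ Real.sqrt (B / A) ∧ ∀ n : ℕ, Λ n = (Λ 0).comp (T ^ n) :=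
  stmt_0_general hframe.1 (fun f ↦ (hframe.2.2 f).2.1) hframe.isGBessel hshift
end

section
/- Let Λ = (Λ_n)_{n∈ℕ} be a g-frame for H with respect to K, with bounds A and B, which is represented by T ∈ B(H), and let S : H → H be a bounded invertible operator with bounded inverse. Then the family ΛS = (Λ_n ∘ S)_{n∈ℕ} is a g-frame (with bounds A·‖S⁻¹‖⁻² and B·‖S‖²), and ΛS is represented by the operator S⁻¹TS, i.e. Λ_n ∘ S = (Λ_0 ∘ S) ∘ (S⁻¹TS)ⁿ for all n ∈ ℕ. -/
section Representation

variable {R M N P : Type*} [Semiring R]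
  [TopologicalSpace M] [AddCommMonoid M] [Module R M]
  [TopologicalSpace N] [AddCommMonoid N] [Module R N]
  [TopologicalSpace P] [AddCommMonoid P] [Module R P]

/-- The family `Λ` is represented by the operator `T`: it is the orbit of `Λ 0` under
precomposition with `T`. -/
def IsRepresentedBy (Λ : ℕ → M →L[R] P) (T : M →L[R] M) : Prop :=
  ∀ n, Λ n = (Λ 0).comp (T ^ n)

theorem IsRepresentedBy.comp_of_semiconj {Λ : ℕ → M →L[R] P} {T : M →L[R] M}
    (hΛ : IsRepresentedBy Λ T) {S : N →L[R] M} {T' : N →L[R] N}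
    (hS : Function.Semiconj S T' T) : IsRepresentedBy (fun n => (Λ n).comp S) T' := by
  intro n
  ext x
  calc Λ n (S x) = Λ 0 ((T ^ n) (S x)) := by rw [hΛ n, ContinuousLinearMap.comp_apply]
    _ = Λ 0 (S ((T' ^ n) x)) := by
      rw [FunLike.coe_pow_eq_iterate, FunLike.coe_pow_eq_iterate, hS.iterate_right n x]

theorem IsRepresentedBy.comp_continuousLinearEquiv {Λ : ℕ → M →L[R] P} {T : M →L[R] M}
    (hΛ : IsRepresentedBy Λ T) (S : N ≃L[R] M) :
    IsRepresentedBy (fun n => (Λ n).comp (S : N →L[R] M))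
      ((S.symm : M →L[R] N).comp (T.comp (S : N →L[R] M))) :=
  hΛ.comp_of_semiconj fun x => S.apply_symm_apply (T (S x))

end Representation

section Frame

variable {E H K : Type*} [NormedAddCommGroup E] [InnerProductSpace ℂ E] [Nontrivial E]
  [NormedAddCommGroup H] [InnerProductSpace ℂ H]
  [NormedAddCommGroup K] [InnerProductSpace ℂ K]
  {Λ : ℕ → H →L[ℂ] K} {A B : ℝ}

theorem IsGFrame.comp_of_antilipschitz (hΛ : IsGFrame Λ A B) {S : E →L[ℂ] H} {c : NNReal}
    (hS : AntilipschitzWith c S) :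
    IsGFrame (fun n => (Λ n).comp S) (A * ((c : ℝ) ^ 2)⁻¹) (B * ‖S‖ ^ 2) := by
  obtain ⟨hA, hAB, hΛ⟩ := hΛ
  have hB : 0 ≤ B := hA.le.trans hAB
  have norm_le (f : E) : ‖f‖ ≤ c * ‖S f‖ := hS.le_mul_norm (map_zero S) f
  obtain ⟨f₀, hf₀⟩ := exists_ne (0 : E)
  have hc : 0 < (c : ℝ) :=
    pos_of_mul_pos_left ((norm_pos_iff.mpr hf₀).trans_le (norm_le f₀)) (norm_nonneg _)
  have lower (f : E) : A * ((c : ℝ) ^ 2)⁻¹ * ‖f‖ ^ 2 ≤ ∑' n, ‖Λ n (S f)‖ ^ 2 :=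
    calc A * ((c : ℝ) ^ 2)⁻¹ * ‖f‖ ^ 2
        ≤ A * ((c : ℝ) ^ 2)⁻¹ * (c * ‖S f‖) ^ 2 := by gcongr; exact norm_le f
      _ = A * ‖S f‖ ^ 2 := by field_simp
      _ ≤ ∑' n, ‖Λ n (S f)‖ ^ 2 := (hΛ (S f)).2.1
  have upper (f : E) : ∑' n, ‖Λ n (S f)‖ ^ 2 ≤ B * ‖S‖ ^ 2 * ‖f‖ ^ 2 :=
    calc ∑' n, ‖Λ n (S f)‖ ^ 2 ≤ B * ‖S f‖ ^ 2 := (hΛ (S f)).2.2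
      _ ≤ B * (‖S‖ * ‖f‖) ^ 2 := by gcongr; exact S.le_opNorm f
      _ = B * ‖S‖ ^ 2 * ‖f‖ ^ 2 := by ring
  have bounds_le : A * ((c : ℝ) ^ 2)⁻¹ ≤ B * ‖S‖ ^ 2 :=
    le_of_mul_le_mul_right ((lower f₀).trans (upper f₀)) (by positivity)
  exact ⟨by positivity, bounds_le, fun f => ⟨(hΛ (S f)).1, lower f, upper f⟩⟩

theorem IsGFrame.comp_continuousLinearEquiv (hΛ : IsGFrame Λ A B) (S : E ≃L[ℂ] H) :
    IsGFrame (fun n => (Λ n).comp (S : E →L[ℂ] H))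
      (A * (‖(S.symm : H →L[ℂ] E)‖ ^ 2)⁻¹) (B * ‖(S : E →L[ℂ] H)‖ ^ 2) :=
  hΛ.comp_of_antilipschitz (S := (S : E →L[ℂ] H)) S.antilipschitz

end Frame

theorem stmt_2_general {E H K : Type*}
    [NormedAddCommGroup E] [InnerProductSpace ℂ E] [Nontrivial E]
    [NormedAddCommGroup H] [InnerProductSpace ℂ H]
    [NormedAddCommGroup K] [InnerProductSpace ℂ K]
    (Λ : ℕ → H →L[ℂ] K) (A B : ℝ) (hframe : IsGFrame Λ A B)
    (T : H →L[ℂ] H) (hrep : ∀ n : ℕ, Λ n = (Λ 0).comp (T ^ n))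
    (S : E ≃L[ℂ] H) :
    IsGFrame (fun n => (Λ n).comp (S : E →L[ℂ] H))
      (A * (‖(S.symm : H →L[ℂ] E)‖ ^ 2)⁻¹) (B * ‖(S : E →L[ℂ] H)‖ ^ 2) ∧
    ∀ n : ℕ, (Λ n).comp (S : E →L[ℂ] H) =
      ((Λ 0).comp (S : E →L[ℂ] H)).comp
        (((S.symm : H →L[ℂ] E).comp (T.comp (S : E →L[ℂ] H))) ^ n) :=
  ⟨hframe.comp_continuousLinearEquiv S, IsRepresentedBy.comp_continuousLinearEquiv hrep S⟩

theorem stmt_2 {H K : Type*} [NormedAddCommGroup H] [InnerProductSpace ℂ H] [Nontrivial H]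
    [CompleteSpace H] [TopologicalSpace.SeparableSpace H]
    [NormedAddCommGroup K] [InnerProductSpace ℂ K]
    [CompleteSpace K] [TopologicalSpace.SeparableSpace K]
    (Λ : ℕ → H →L[ℂ] K) (A B : ℝ) (hframe : IsGFrame Λ A B)
    (T : H →L[ℂ] H) (hrep : ∀ n : ℕ, Λ n = (Λ 0).comp (T ^ n))
    (S : H ≃L[ℂ] H) :
    IsGFrame (fun n => (Λ n).comp (S : H →L[ℂ] H))
      (A * (‖(S.symm : H →L[ℂ] H)‖ ^ 2)⁻¹) (B * ‖(S : H →L[ℂ] H)‖ ^ 2) ∧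
    ∀ n : ℕ, (Λ n).comp (S : H →L[ℂ] H) =
      ((Λ 0).comp (S : H →L[ℂ] H)).comp
        (((S.symm : H →L[ℂ] H).comp (T.comp (S : H →L[ℂ] H))) ^ n) :=
  stmt_2_general Λ A B hframe T hrep S
end

section
/- Let Λ₁ ∈ B(H,K) and T ∈ B(H) be such that the family (Λ₁ ∘ Tⁿ)_{n∈ℕ} is a g-frame for H with lower bound A. If ‖Λ₁‖ < √A, then T is injective. (In fact, for every f ∈ H one has ∑_{n≥1} ‖Tⁿ f‖² ≥ (A/‖Λ₁‖² − 1)‖f‖².) -/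
/-! Since `‖Λ₁ (Tⁿ f)‖ ≤ ‖Λ₁‖ ‖Tⁿ f‖`, the lower frame bound gives
`A ‖f‖² ≤ ‖Λ₁‖² ∑_{n ≥ 0} ‖Tⁿ f‖²`; dividing by `‖Λ₁‖²` and removing the term `n = 0` yields the
quantitative bound. If `T f = 0`, the remaining sum vanishes, which forces `f = 0` as soon as
`‖Λ₁‖² < A`. In `ℝ≥0∞` neither the divergence of `∑ ‖Tⁿ f‖²` nor the vanishing of `Λ₁` has to be
treated separately. -/

open scoped ENNReal

section Sequences

variable {𝕜 E F : Type*} [NontriviallyNormedField 𝕜] [SeminormedAddCommGroup E] [NormedSpace 𝕜 E]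
  [SeminormedAddCommGroup F] [NormedSpace 𝕜 F] {p : ℝ}

theorem tsum_enorm_apply_rpow_le {ι : Type*} (Λ : E →L[𝕜] F) (x : ι → E) (hp : 0 ≤ p) :
    ∑' i, ‖Λ (x i)‖ₑ ^ p ≤ ‖Λ‖ₑ ^ p * ∑' i, ‖x i‖ₑ ^ p := by
  rw [← ENNReal.tsum_mul_left]
  gcongr with i
  rw [← ENNReal.mul_rpow_of_nonneg _ _ hp]
  gcongr
  exact Λ.le_opENorm (x i)

theorem div_sub_one_mul_enorm_rpow_le_tsum_succ (Λ : E →L[𝕜] F) (x : ℕ → E) (hp : 0 ≤ p)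
    {A : ℝ≥0∞} (hA : A * ‖x 0‖ₑ ^ p ≤ ∑' n, ‖Λ (x n)‖ₑ ^ p) :
    (A / ‖Λ‖ₑ ^ p - 1) * ‖x 0‖ₑ ^ p ≤ ∑' n, ‖x (n + 1)‖ₑ ^ p := by
  have hdiv : A / ‖Λ‖ₑ ^ p * ‖x 0‖ₑ ^ p ≤ ∑' n, ‖x n‖ₑ ^ p := by
    rw [← ENNReal.mul_div_right_comm]
    exact ENNReal.div_le_of_le_mul' (hA.trans (tsum_enorm_apply_rpow_le Λ x hp))
  have hx : ‖x 0‖ₑ ^ p ≠ ∞ := ENNReal.rpow_ne_top_of_nonneg hp enorm_ne_top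
  rw [ENNReal.sub_mul fun _ _ => hx, one_mul, tsub_le_iff_left]
  rwa [tsum_eq_zero_add' ENNReal.summable] at hdiv

end Sequences

-- Not an equality: for `c = 0 < a` and `0 < b` the left side is `0`, because `a / 0 = 0` in `ℝ`,
-- while the right side is `∞`.
theorem ofReal_div_sub_one_mul_le (a : ℝ) {b c : ℝ} (hb : 0 ≤ b) (hc : 0 ≤ c) :
    ENNReal.ofReal ((a / c - 1) * b) ≤
      (ENNReal.ofReal a / ENNReal.ofReal c - 1) * ENNReal.ofReal b := by
  rw [ENNReal.ofReal_mul' hb, ENNReal.ofReal_sub _ zero_le_one, ENNReal.ofReal_one]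
  gcongr
  exact ENNReal.ofReal_div_le hc

theorem IsGFrame.ofReal_mul_enorm_sq_le_tsum {H K : Type*} [NormedAddCommGroup H]
    [InnerProductSpace ℂ H] [NormedAddCommGroup K] [InnerProductSpace ℂ K]
    {Λ : ℕ → H →L[ℂ] K} {A B : ℝ} (hΛ : IsGFrame Λ A B) (f : H) :
    ENNReal.ofReal A * ‖f‖ₑ ^ 2 ≤ ∑' n, ‖Λ n f‖ₑ ^ 2 := by
  obtain ⟨hA, -, hbounds⟩ := hΛ
  obtain ⟨hsummable, hlower, -⟩ := hbounds f
  have h := ENNReal.ofReal_le_ofReal hlower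
  rw [ENNReal.ofReal_tsum_of_nonneg (fun n => sq_nonneg _) hsummable,
    ENNReal.ofReal_mul hA.le] at h
  simpa only [ENNReal.ofReal_pow (norm_nonneg _), ofReal_norm] using h

theorem stmt_4_general {𝕜 E F : Type*} [NontriviallyNormedField 𝕜]
    [NormedAddCommGroup E] [NormedSpace 𝕜 E] [SeminormedAddCommGroup F] [NormedSpace 𝕜 F]
    {p : ℝ} (hp : 0 < p) (Λ₁ : E →L[𝕜] F) (T : E →ₗ[𝕜] E) {A : ℝ≥0∞}
    (hA : ∀ f, A * ‖f‖ₑ ^ p ≤ ∑' n : ℕ, ‖Λ₁ ((T ^ n) f)‖ₑ ^ p) (hΛ₁ : ‖Λ₁‖ₑ ^ p < A) :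
    Function.Injective T ∧
    ∀ f, (A / ‖Λ₁‖ₑ ^ p - 1) * ‖f‖ₑ ^ p ≤ ∑' n : ℕ, ‖(T ^ (n + 1)) f‖ₑ ^ p := by
  have hsum (f : E) : (A / ‖Λ₁‖ₑ ^ p - 1) * ‖f‖ₑ ^ p ≤ ∑' n : ℕ, ‖(T ^ (n + 1)) f‖ₑ ^ p :=
    div_sub_one_mul_enorm_rpow_le_tsum_succ Λ₁ (fun n => (T ^ n) f) hp.le (hA f)
  refine ⟨(injective_iff_map_eq_zero T).2 fun f hf => ?_, hsum⟩
  have hgap : A / ‖Λ₁‖ₑ ^ p - 1 ≠ 0 := by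
    refine (tsub_pos_of_lt ?_).ne'
    rwa [ENNReal.lt_div_iff_mul_lt (.inr ENNReal.one_ne_top) (.inr one_ne_zero), one_mul]
  have horbit (n : ℕ) : (T ^ (n + 1)) f = 0 := by
    rw [pow_succ, Module.End.mul_apply, hf, map_zero]
  have hzero : (A / ‖Λ₁‖ₑ ^ p - 1) * ‖f‖ₑ ^ p = 0 := by
    simpa only [horbit, enorm_zero, ENNReal.zero_rpow_of_pos hp, tsum_zero, nonpos_iff_eq_zero]
      using hsum f
  exact enorm_eq_zero.1 ((ENNReal.rpow_eq_zero_iff_of_pos hp).1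
    ((mul_eq_zero.1 hzero).resolve_left hgap))

theorem stmt_4 {H K : Type*} [NormedAddCommGroup H] [InnerProductSpace ℂ H]
    [CompleteSpace H] [TopologicalSpace.SeparableSpace H]
    [NormedAddCommGroup K] [InnerProductSpace ℂ K]
    [CompleteSpace K] [TopologicalSpace.SeparableSpace K]
    (Λ₁ : H →L[ℂ] K) (T : H →L[ℂ] H) (A B : ℝ)
    (hframe : IsGFrame (fun n => Λ₁.comp (T ^ n)) A B)
    (hΛ₁ : ‖Λ₁‖ < Real.sqrt A) :
    Function.Injective T ∧
    ∀ f : H, ENNReal.ofReal ((A / ‖Λ₁‖ ^ 2 - 1) * ‖f‖ ^ 2) ≤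
      ∑' n : ℕ, ENNReal.ofReal (‖(T ^ (n + 1)) f‖ ^ 2) := by
  have hnorm : ‖Λ₁‖ₑ ^ 2 < ENNReal.ofReal A := by
    rw [← ofReal_norm, ← ENNReal.ofReal_pow (norm_nonneg _),
      ENNReal.ofReal_lt_ofReal_iff hframe.1]
    exact (Real.lt_sqrt (norm_nonneg _)).1 hΛ₁
  have h := stmt_4_general two_pos Λ₁ T.toLinearMap
    (by simpa [← ContinuousLinearMap.toLinearMap_pow] using hframe.ofReal_mul_enorm_sq_le_tsum)
    (by simpa using hnorm)
  exact ⟨h.1, fun f => (ofReal_div_sub_one_mul_le A (sq_nonneg _) (sq_nonneg _)).trans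
    (by simpa [← ContinuousLinearMap.toLinearMap_pow, ENNReal.ofReal_pow] using h.2 f)⟩
end

section
/- Let Λ₁ ∈ B(H,K) and T ∈ B(H) be such that the family (Λ₁ ∘ Tⁿ)_{n∈ℕ} is a g-frame for H. Then for every f ∈ H, Tⁿ f → 0 in H as n → ∞. -/
open Filter Topology

/-!
Applying the lower frame bound to `T ^ n f` bounds `‖T ^ n f‖ ^ 2` by a multiple of the frame sum
of `T ^ n f`, and along an orbit this sum is the `n`-th tail of the frame sum of `f`.
-/

theorem tendsto_iterate_zero_of_hasSum {X G : Type*} [AddCommGroup G] [TopologicalSpace G]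
    [IsTopologicalAddGroup G] [T2Space G] {T : X → X} {g s : X → G}
    (hs : ∀ x, HasSum (fun n => g (T^[n] x)) (s x)) (x : X) :
    Tendsto (fun n => s (T^[n] x)) atTop (𝓝 0) := by
  have tail_eq (n : ℕ) : s (T^[n] x) = s x - ∑ i ∈ Finset.range n, g (T^[i] x) := by
    have htail := (hasSum_nat_add_iff' n).2 (hs x)
    simp only [Function.iterate_add_apply] at htail
    exact (hs (T^[n] x)).unique htail
  simpa only [tail_eq, sub_self] using (hs x).tendsto_sum_nat.const_sub (s x)

theorem tendsto_zero_of_norm_rpow_tendsto_zero {ι E : Type*} [SeminormedAddGroup E]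
    {l : Filter ι} {u : ι → E} {p : ℝ} (hp : 0 < p)
    (hu : Tendsto (fun i => ‖u i‖ ^ p) l (𝓝 0)) : Tendsto u l (𝓝 0) := by
  rw [tendsto_zero_iff_norm_tendsto_zero]
  simpa only [Real.rpow_rpow_inv (norm_nonneg _) hp.ne'] using
    hu.rpow_const_nhds_zero (inv_pos.2 hp)

theorem stmt_6_general {H : Type*} [SeminormedAddGroup H] {T : H → H} {g : H → ℝ} {A p : ℝ}
    (hA : 0 < A) (hp : 0 < p) (hsum : ∀ f, Summable fun n => g (T^[n] f))
    (hlower : ∀ f, A * ‖f‖ ^ p ≤ ∑' n, g (T^[n] f)) (f : H) :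
    Tendsto (fun n => T^[n] f) atTop (𝓝 0) := by
  have htail : Tendsto (fun n => ∑' m, g (T^[m] (T^[n] f))) atTop (𝓝 0) :=
    tendsto_iterate_zero_of_hasSum (fun x => (hsum x).hasSum) f
  have hbound (n : ℕ) : ‖T^[n] f‖ ^ p ≤ (∑' m, g (T^[m] (T^[n] f))) / A :=
    (le_div_iff₀' hA).2 (hlower _)
  refine tendsto_zero_of_norm_rpow_tendsto_zero hp
    (squeeze_zero (fun n => by positivity) hbound ?_)
  simpa only [zero_div] using htail.div_const A

theorem stmt_6 {H K : Type*} [NormedAddCommGroup H] [InnerProductSpace ℂ H]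
    [CompleteSpace H] [TopologicalSpace.SeparableSpace H]
    [NormedAddCommGroup K] [InnerProductSpace ℂ K]
    [CompleteSpace K] [TopologicalSpace.SeparableSpace K]
    (Λ₁ : H →L[ℂ] K) (T : H →L[ℂ] H) (A B : ℝ)
    (hframe : IsGFrame (fun n => Λ₁.comp (T ^ n)) A B) :
    ∀ f : H, Tendsto (fun n : ℕ => (T ^ n) f) atTop (𝓝 0) := by
  simp only [IsGFrame, ContinuousLinearMap.comp_apply, FunLike.coe_pow_eq_iterate,
    ← Real.rpow_two] at hframe ⊢
  exact stmt_6_general (g := fun f => ‖Λ₁ f‖ ^ (2 : ℝ)) hframe.1 two_pos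
    (fun f => (hframe.2.2 f).1) fun f => (hframe.2.2 f).2.1
end

section
/- Let H be a nonzero complex separable Hilbert space and let T ∈ B(H) be unitary (T*T = TT* = Id_H). Then for every bounded operator Λ₁ ∈ B(H,K), the family (Λ₁ ∘ Tⁿ)_{n∈ℕ} is not a g-frame for H. -/
open Filter Topology

/-!
If `(Λ₁ Tⁿ)` is a g-frame, the lower bound at `Tᵐ f` reads
`A ‖Tᵐ f‖² ≤ ∑_{n ≥ m} ‖Λ₁ Tⁿ f‖²`, and the right-hand side is the tail of a convergent series.
Hence every orbit of `T` tends to `0`, which is impossible when `T` does not decrease norms.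
-/

theorem tendsto_iterate_zero_of_le_tsum {X : Type*} {T : X → X} {φ ψ : X → ℝ} (hφ : ∀ x, 0 ≤ φ x)
    (h : ∀ x, φ x ≤ ∑' n, ψ (T^[n] x)) (x : X) :
    Tendsto (fun m => φ (T^[m] x)) atTop (𝓝 0) := by
  have le_tail (m : ℕ) : φ (T^[m] x) ≤ ∑' n, ψ (T^[n + m] x) := by
    simpa only [Function.iterate_add_apply] using h (T^[m] x)
  exact squeeze_zero (fun _ => hφ _) le_tail (tendsto_sum_nat_add fun n => ψ (T^[n] x))

theorem monotone_norm_iterate {E : Type*} [Norm E] {T : E → E} (hT : ∀ x, ‖x‖ ≤ ‖T x‖) (x : E) :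
    Monotone fun n => ‖T^[n] x‖ :=
  monotone_nat_of_le_succ fun n => by
    simpa only [Function.iterate_succ_apply'] using hT (T^[n] x)

section

variable {H K : Type*} [NormedAddCommGroup H] [InnerProductSpace ℂ H]
  [NormedAddCommGroup K] [InnerProductSpace ℂ K] {T : H →L[ℂ] H} {Λ₁ : H →L[ℂ] K} {A B : ℝ}

theorem IsGFrame.tendsto_iterate_zero (hΛ : IsGFrame (fun n => Λ₁.comp (T ^ n)) A B) (f : H) :
    Tendsto (fun n => T^[n] f) atTop (𝓝 0) := by
  obtain ⟨hA, -, hΛ⟩ := hΛ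
  have lower_bound (g : H) : A * ‖g‖ ^ 2 ≤ ∑' n, ‖Λ₁ (T^[n] g)‖ ^ 2 := by
    simpa only [ContinuousLinearMap.comp_apply, FunLike.coe_pow_eq_iterate] using (hΛ g).2.1
  have scaled_norm_sq_orbit : Tendsto (fun n => A * ‖T^[n] f‖ ^ 2) atTop (𝓝 0) :=
    tendsto_iterate_zero_of_le_tsum (φ := fun g => A * ‖g‖ ^ 2) (ψ := fun g => ‖Λ₁ g‖ ^ 2)
      (fun g => by positivity) lower_bound f
  have norm_sq_orbit : Tendsto (fun n => ‖T^[n] f‖ ^ 2) atTop (𝓝 0) := by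
    simpa only [inv_mul_cancel_left₀ hA.ne', mul_zero] using scaled_norm_sq_orbit.const_mul A⁻¹
  have norm_orbit : Tendsto (fun n => ‖T^[n] f‖) atTop (𝓝 0) := by
    simpa only [Real.sqrt_sq (norm_nonneg _), Real.sqrt_zero] using norm_sq_orbit.sqrt
  exact tendsto_zero_iff_norm_tendsto_zero.2 norm_orbit

theorem stmt_7_general [Nontrivial H] (hT : ∀ f, ‖f‖ ≤ ‖T f‖) (Λ₁ : H →L[ℂ] K) (A B : ℝ) :
    ¬ IsGFrame (fun n => Λ₁.comp (T ^ n)) A B := by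
  intro hΛ
  obtain ⟨f, hf⟩ := exists_ne (0 : H)
  have norm_orbit : Tendsto (fun n => ‖T^[n] f‖) atTop (𝓝 0) :=
    tendsto_zero_iff_norm_tendsto_zero.1 (hΛ.tendsto_iterate_zero f)
  exact hf (norm_le_zero_iff.1 ((monotone_norm_iterate hT f).ge_of_tendsto norm_orbit 0))

end

theorem stmt_7 {H K : Type*} [NormedAddCommGroup H] [InnerProductSpace ℂ H]
    [CompleteSpace H] [TopologicalSpace.SeparableSpace H] [Nontrivial H]
    [NormedAddCommGroup K] [InnerProductSpace ℂ K]
    [CompleteSpace K] [TopologicalSpace.SeparableSpace K]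
    (T : H →L[ℂ] H)
    (hunitary₁ : T.adjoint.comp T = ContinuousLinearMap.id ℂ H)
    (hunitary₂ : T.comp T.adjoint = ContinuousLinearMap.id ℂ H) :
    ∀ (Λ₁ : H →L[ℂ] K) (A B : ℝ), ¬ IsGFrame (fun n => Λ₁.comp (T ^ n)) A B :=
  stmt_7_general fun f => (T.norm_map_iff_adjoint_comp_self.2 hunitary₁ f).ge
end

section
/- Let H₁, H₂, K be complex separable Hilbert spaces, T ∈ B(H₁), S ∈ B(H₂), Λ ∈ B(H₁,K), Θ ∈ B(H₂,K), and let V : H₁ → H₂ be a bounded invertible operator with bounded inverse such that T = V⁻¹SV and Θ ∘ V = Λ. Then the family (Λ ∘ Tⁿ)_{n∈ℕ} is a g-frame for H₁ if and only if the family (Θ ∘ Sⁿ)_{n∈ℕ} is a g-frame for H₂. -/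
/-!
A linear homeomorphism `V` with `V T = S V` and `Θ V = Λ` gives `Λ Tⁿ = Θ V Tⁿ = (Θ Sⁿ) V`, so the
first family is the second one precomposed with `V`. Since `V` distorts norms by at most constant
factors in both directions, such a precomposition only rescales the frame bounds.
-/

section Intertwining

variable {R E F : Type*} [Semiring R]
  [TopologicalSpace E] [AddCommMonoid E] [Module R E]
  [TopologicalSpace F] [AddCommMonoid F] [Module R F]

theorem comp_pow_eq_pow_comp {T : E →L[R] E} {S : F →L[R] F} {V : E →L[R] F}
    (h : V.comp T = S.comp V) (n : ℕ) : V.comp (T ^ n) = (S ^ n).comp V := by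
  have hsemiconj : Function.Semiconj V T S := DFunLike.congr_fun h
  ext f
  simpa only [ContinuousLinearMap.comp_apply, FunLike.coe_pow_eq_iterate]
    using hsemiconj.iterate_right n f

end Intertwining

section GFrame

variable {H H' K : Type*}
  [NormedAddCommGroup H] [InnerProductSpace ℂ H]
  [NormedAddCommGroup H'] [InnerProductSpace ℂ H']
  [NormedAddCommGroup K] [InnerProductSpace ℂ K]

-- `max a ‖V‖` rather than `‖V‖`: on the zero space `‖V‖ = 0 < a`, and the
-- bounds would be out of order.
theorem IsGFrame.comp_of_bounded_below {Λ : ℕ → H →L[ℂ] K} {A B a : ℝ} (hΛ : IsGFrame Λ A B)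
    (V : H' →L[ℂ] H) (ha : 0 < a) (hV : ∀ f, a * ‖f‖ ≤ ‖V f‖) :
    IsGFrame (fun n => (Λ n).comp V) (A * a ^ 2) (B * max a ‖V‖ ^ 2) := by
  obtain ⟨hA, hAB, hframe⟩ := hΛ
  have hB : 0 ≤ B := hA.le.trans hAB
  refine ⟨by positivity, by gcongr; exact le_max_left a ‖V‖, fun f => ?_⟩
  obtain ⟨hsum, hlower, hupper⟩ := hframe (V f)
  refine ⟨hsum, ?_, ?_⟩
  · calc A * a ^ 2 * ‖f‖ ^ 2 = A * (a * ‖f‖) ^ 2 := by ring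
      _ ≤ A * ‖V f‖ ^ 2 := by gcongr; exact hV f
      _ ≤ ∑' n, ‖Λ n (V f)‖ ^ 2 := hlower
  · calc ∑' n, ‖Λ n (V f)‖ ^ 2 ≤ B * ‖V f‖ ^ 2 := hupper
      _ ≤ B * (max a ‖V‖ * ‖f‖) ^ 2 := by
          gcongr
          exact V.le_of_opNorm_le (le_max_right a ‖V‖) f
      _ = B * max a ‖V‖ ^ 2 * ‖f‖ ^ 2 := by ring

theorem IsGFrame.exists_comp_equiv {Λ : ℕ → H →L[ℂ] K} {A B : ℝ} (hΛ : IsGFrame Λ A B)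
    (V : H' ≃L[ℂ] H) :
    ∃ A' B' : ℝ, IsGFrame (fun n => (Λ n).comp (V : H' →L[ℂ] H)) A' B' := by
  obtain ⟨c, hc, hsymm⟩ := (V.symm : H →L[ℂ] H').bound
  have hbelow : ∀ f, c⁻¹ * ‖f‖ ≤ ‖(V : H' →L[ℂ] H) f‖ := fun f => by
    simpa [inv_mul_le_iff₀ hc] using hsymm (V f)
  exact ⟨_, _, hΛ.comp_of_bounded_below _ (inv_pos.mpr hc) hbelow⟩

theorem exists_isGFrame_comp_equiv_iff {Λ : ℕ → H →L[ℂ] K} (V : H' ≃L[ℂ] H) :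
    (∃ A B : ℝ, IsGFrame (fun n => (Λ n).comp (V : H' →L[ℂ] H)) A B) ↔
      ∃ A B : ℝ, IsGFrame Λ A B := by
  constructor
  · rintro ⟨A, B, hΛV⟩
    simpa [ContinuousLinearMap.comp_assoc] using hΛV.exists_comp_equiv V.symm
  · rintro ⟨A, B, hΛ⟩
    exact hΛ.exists_comp_equiv V

end GFrame

theorem stmt_10_general {H₁ H₂ K : Type*}
    [NormedAddCommGroup H₁] [InnerProductSpace ℂ H₁]
    [NormedAddCommGroup H₂] [InnerProductSpace ℂ H₂]
    [NormedAddCommGroup K] [InnerProductSpace ℂ K]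
    (T : H₁ →L[ℂ] H₁) (S : H₂ →L[ℂ] H₂)
    (Λ : H₁ →L[ℂ] K) (Θ : H₂ →L[ℂ] K)
    (V : H₁ ≃L[ℂ] H₂)
    (hT : T = ((V.symm : H₂ →L[ℂ] H₁).comp S).comp (V : H₁ →L[ℂ] H₂))
    (hΘV : Θ.comp (V : H₁ →L[ℂ] H₂) = Λ) :
    (∃ A B : ℝ, IsGFrame (fun n => Λ.comp (T ^ n)) A B) ↔
    (∃ A B : ℝ, IsGFrame (fun n => Θ.comp (S ^ n)) A B) := by
  have hintertwine : (V : H₁ →L[ℂ] H₂).comp T = S.comp (V : H₁ →L[ℂ] H₂) := by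
    ext f
    simp [hT]
  have hfamily : ∀ n, Λ.comp (T ^ n) = (Θ.comp (S ^ n)).comp (V : H₁ →L[ℂ] H₂) := fun n => by
    rw [← hΘV, ContinuousLinearMap.comp_assoc, comp_pow_eq_pow_comp hintertwine,
      ContinuousLinearMap.comp_assoc]
  simp only [hfamily]
  exact exists_isGFrame_comp_equiv_iff V

theorem stmt_10 {H₁ H₂ K : Type*}
    [NormedAddCommGroup H₁] [InnerProductSpace ℂ H₁]
    [CompleteSpace H₁] [TopologicalSpace.SeparableSpace H₁]
    [NormedAddCommGroup H₂] [InnerProductSpace ℂ H₂]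
    [CompleteSpace H₂] [TopologicalSpace.SeparableSpace H₂]
    [NormedAddCommGroup K] [InnerProductSpace ℂ K]
    [CompleteSpace K] [TopologicalSpace.SeparableSpace K]
    (T : H₁ →L[ℂ] H₁) (S : H₂ →L[ℂ] H₂)
    (Λ : H₁ →L[ℂ] K) (Θ : H₂ →L[ℂ] K)
    (V : H₁ ≃L[ℂ] H₂)
    (hT : T = ((V.symm : H₂ →L[ℂ] H₁).comp S).comp (V : H₁ →L[ℂ] H₂))
    (hΘV : Θ.comp (V : H₁ →L[ℂ] H₂) = Λ) :
    (∃ A B : ℝ, IsGFrame (fun n => Λ.comp (T ^ n)) A B) ↔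
    (∃ A B : ℝ, IsGFrame (fun n => Θ.comp (S ^ n)) A B) :=
  stmt_10_general T S Λ Θ V hT hΘV
end

section
/- Let H be a nonzero complex separable Hilbert space, let Λ = (Λ_n)_{n∈ℕ} be a g-frame for H with respect to K having lower bound A, and let S_Λ be its frame operator. If there exists Θ ∈ B(H,K) such that the family (Θ ∘ S_Λⁿ)_{n∈ℕ} is a g-frame for H, then A < 1. -/
/-!
Since `⟪f, S f⟫ = ∑ ‖Λ n f‖² ≥ A ‖f‖²`, the frame operator satisfies `‖S f‖ ≥ A ‖f‖`, so `A ≥ 1`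
would keep `‖S ^ n f‖` away from `0`. On the other hand, applying the lower bound of the frame
`(Θ ∘ S ^ n)` to `S ^ m f` bounds `‖S ^ m f‖²` by a multiple of the tail `∑_{n ≥ m} ‖Θ (S ^ n f)‖²`,
so every orbit of `S` tends to `0`.
-/

open Filter Topology
open scoped InnerProductSpace

theorem tendsto_iterate_zero_of_mul_norm_sq_le_tsum {E : Type*} [SeminormedAddCommGroup E]
    {T : E → E} {φ : E → ℝ} {c : ℝ} (hc : 0 < c)
    (hφ : ∀ x, c * ‖x‖ ^ 2 ≤ ∑' n, φ (T^[n] x)) (x : E) :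
    Tendsto (fun n ↦ T^[n] x) atTop (𝓝 0) := by
  have le_tail (m : ℕ) : c * ‖T^[m] x‖ ^ 2 ≤ ∑' n, φ (T^[n + m] x) := by
    simpa only [Function.iterate_add_apply] using hφ (T^[m] x)
  have tail_tendsto : Tendsto (fun m ↦ c * ‖T^[m] x‖ ^ 2) atTop (𝓝 0) :=
    squeeze_zero (fun _ ↦ by positivity) le_tail (tendsto_sum_nat_add fun n ↦ φ (T^[n] x))
  have norm_sq_tendsto : Tendsto (fun m ↦ ‖T^[m] x‖ ^ 2) atTop (𝓝 0) := by
    simpa [hc.ne'] using tail_tendsto.const_mul c⁻¹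
  exact tendsto_zero_iff_norm_tendsto_zero.2 (by simpa using norm_sq_tendsto.sqrt)

theorem lt_one_of_mul_le_succ_of_tendsto_zero {u : ℕ → ℝ} {a : ℝ} (hu₀ : 0 < u 0)
    (hu : ∀ n, a * u n ≤ u (n + 1)) (hlim : Tendsto u atTop (𝓝 0)) : a < 1 := by
  by_contra! ha
  have le_u (n : ℕ) : u 0 ≤ u n :=
    calc u 0 ≤ a ^ n * u 0 := le_mul_of_one_le_left hu₀.le (one_le_pow₀ ha)
      _ ≤ u n := geom_le (zero_le_one.trans ha) n fun k _ ↦ hu k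
  exact hu₀.not_ge (ge_of_tendsto' hlim le_u)

theorem mul_norm_le_norm_of_mul_norm_sq_le_re_inner {𝕜 E : Type*} [RCLike 𝕜]
    [SeminormedAddCommGroup E] [InnerProductSpace 𝕜 E] {c : ℝ} {x y : E}
    (h : c * ‖x‖ ^ 2 ≤ RCLike.re ⟪x, y⟫_𝕜) : c * ‖x‖ ≤ ‖y‖ := by
  rcases (norm_nonneg x).eq_or_lt with hx | hx
  · simp [← hx]
  · refine le_of_mul_le_mul_left ?_ hx
    calc ‖x‖ * (c * ‖x‖) = c * ‖x‖ ^ 2 := by ring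
      _ ≤ ‖x‖ * ‖y‖ := h.trans (re_inner_le_norm x y)

section FrameOperator

variable {𝕜 H K ι : Type*} [RCLike 𝕜]
  [NormedAddCommGroup H] [InnerProductSpace 𝕜 H] [CompleteSpace H]
  [NormedAddCommGroup K] [InnerProductSpace 𝕜 K] [CompleteSpace K]

theorem hasSum_norm_sq_of_hasSum_adjoint_apply {Λ : ι → H →L[𝕜] K} {f g : H}
    (h : HasSum (fun i ↦ (Λ i).adjoint (Λ i f)) g) :
    HasSum (fun i ↦ ‖Λ i f‖ ^ 2) (RCLike.re ⟪f, g⟫_𝕜) := by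
  simpa only [innerSL_apply_apply, ContinuousLinearMap.adjoint_inner_right, RCLike.reCLM_apply,
    inner_self_eq_norm_sq] using (h.mapL (innerSL 𝕜 f)).mapL (RCLike.reCLM (K := 𝕜))

theorem stmt_11_general [Nontrivial H] {L : Type*} [Norm L]
    {Λ : ι → H →L[𝕜] K} {A : ℝ} (hΛ : ∀ f, A * ‖f‖ ^ 2 ≤ ∑' i, ‖Λ i f‖ ^ 2)
    {S : H →L[𝕜] H} (hS : ∀ f, HasSum (fun i ↦ (Λ i).adjoint (Λ i f)) (S f))
    {Θ : H → L} {A' : ℝ} (hA' : 0 < A')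
    (hΘ : ∀ f, A' * ‖f‖ ^ 2 ≤ ∑' n, ‖Θ ((S ^ n) f)‖ ^ 2) : A < 1 := by
  obtain ⟨f, hf⟩ := exists_ne (0 : H)
  have mul_norm_le (g : H) : A * ‖g‖ ≤ ‖S g‖ := by
    refine mul_norm_le_norm_of_mul_norm_sq_le_re_inner (𝕜 := 𝕜) ?_
    exact (hΛ g).trans_eq (hasSum_norm_sq_of_hasSum_adjoint_apply (hS g)).tsum_eq
  have orbit_tendsto : Tendsto (fun n ↦ S^[n] f) atTop (𝓝 0) :=
    tendsto_iterate_zero_of_mul_norm_sq_le_tsum (φ := fun g ↦ ‖Θ g‖ ^ 2) hA'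
      (by simpa only [FunLike.coe_pow_eq_iterate] using hΘ) f
  refine lt_one_of_mul_le_succ_of_tendsto_zero (u := fun n ↦ ‖S^[n] f‖) (norm_pos_iff.2 hf)
    (fun n ↦ ?_) (tendsto_zero_iff_norm_tendsto_zero.1 orbit_tendsto)
  simpa only [Function.iterate_succ_apply'] using mul_norm_le (S^[n] f)

end FrameOperator

theorem stmt_11 {H K : Type*} [NormedAddCommGroup H] [InnerProductSpace ℂ H]
    [CompleteSpace H] [TopologicalSpace.SeparableSpace H] [Nontrivial H]
    [NormedAddCommGroup K] [InnerProductSpace ℂ K]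
    [CompleteSpace K] [TopologicalSpace.SeparableSpace K]
    (Λ : ℕ → H →L[ℂ] K) (A B : ℝ) (hframe : IsGFrame Λ A B)
    -- `S` is the frame operator of `Λ`
    (S : H →L[ℂ] H)
    (hS : ∀ f : H, HasSum (fun n => (Λ n).adjoint (Λ n f)) (S f))
    (hrep : ∃ (Θ : H →L[ℂ] K) (A' B' : ℝ), IsGFrame (fun n => Θ.comp (S ^ n)) A' B') :
    A < 1 := by
  obtain ⟨Θ, A', B', hA', -, hΘ⟩ := hrep
  exact stmt_11_general (fun f ↦ (hframe.2.2 f).2.1) hS hA' fun f ↦ (hΘ f).2.1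
end

section
/- Let H be an infinite-dimensional complex separable Hilbert space and K a finite-dimensional Hilbert space. If Λ₁ ∈ B(H,K) and T ∈ B(H) are such that the family (Λ₁ ∘ Tⁿ)_{n∈ℕ} is a g-frame for H, then T is not a compact operator. -/
/-!
Splitting off the `n = 0` term of the frame sum of `f` and recognising the rest as the frame sum of
`T f` gives `A ‖f‖² ≤ ‖Λ₁ f‖² + B ‖T f‖²`, so `f ↦ (T f, Λ₁ f)` is bounded below. If `T` is
compact, so is this map, because `Λ₁` has finite rank; but by Riesz's theorem a compact operator
that is bounded below has a finite-dimensional domain.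
-/

theorem isCompactOperator_prodMk {X Y Z : Type*} [Zero X] [TopologicalSpace X]
    [TopologicalSpace Y] [TopologicalSpace Z] {f : X → Y} {g : X → Z}
    (hf : IsCompactOperator f) (hg : IsCompactOperator g) :
    IsCompactOperator fun x => (f x, g x) := by
  obtain ⟨C, hC, hfC⟩ := hf
  obtain ⟨D, hD, hgD⟩ := hg
  exact ⟨C ×ˢ D, hC.prod hD, Filter.inter_mem hfC hgD⟩

theorem finiteDimensional_of_isCompactOperator_of_isUniformInducing (𝕜 : Type*) {E X : Type*}
    [NontriviallyNormedField 𝕜] [CompleteSpace 𝕜] [AddCommGroup E] [Module 𝕜 E] [UniformSpace E]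
    [IsUniformAddGroup E] [ContinuousSMul 𝕜 E] [T2Space E] [UniformSpace X] {f : E → X}
    (hf : IsCompactOperator f) (hfi : IsUniformInducing f) : FiniteDimensional 𝕜 E := by
  obtain ⟨C, hC, hfC⟩ := hf
  exact .of_totallyBounded_nhds_zero 𝕜 hfC (totallyBounded_preimage hfi hC.totallyBounded)

namespace IsGFrame

variable {H K : Type*} [NormedAddCommGroup H] [InnerProductSpace ℂ H]
  [NormedAddCommGroup K] [InnerProductSpace ℂ K]
  {Λ₁ : H →L[ℂ] K} {T : H →L[ℂ] H} {A B : ℝ}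

theorem mul_norm_sq_le_add (h : IsGFrame (fun n => Λ₁.comp (T ^ n)) A B) (f : H) :
    A * ‖f‖ ^ 2 ≤ ‖Λ₁ f‖ ^ 2 + B * ‖T f‖ ^ 2 := by
  obtain ⟨-, -, hbounds⟩ := h
  obtain ⟨hsum, hlower, -⟩ := hbounds f
  obtain ⟨-, -, hupper⟩ := hbounds (T f)
  calc A * ‖f‖ ^ 2 ≤ ∑' n, ‖Λ₁ ((T ^ n) f)‖ ^ 2 := hlower
    _ = ‖Λ₁ f‖ ^ 2 + ∑' n, ‖Λ₁ ((T ^ n) (T f))‖ ^ 2 := hsum.tsum_eq_zero_add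
    _ ≤ ‖Λ₁ f‖ ^ 2 + B * ‖T f‖ ^ 2 := by gcongr; exact hupper

theorem antilipschitzWith_prod (h : IsGFrame (fun n => Λ₁.comp (T ^ n)) A B) :
    AntilipschitzWith (√((1 + B) / A)).toNNReal (T.prod Λ₁) := by
  have hA : 0 < A := h.1
  have hB : 0 < B := hA.trans_le h.2.1
  refine ContinuousLinearMap.antilipschitz_of_bound _ fun f => ?_
  have hsq : A * ‖f‖ ^ 2 ≤ (1 + B) * ‖T.prod Λ₁ f‖ ^ 2 := calc
    A * ‖f‖ ^ 2 ≤ ‖Λ₁ f‖ ^ 2 + B * ‖T f‖ ^ 2 := h.mul_norm_sq_le_add f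
    _ ≤ ‖T.prod Λ₁ f‖ ^ 2 + B * ‖T.prod Λ₁ f‖ ^ 2 := by
      gcongr
      · exact norm_snd_le (T.prod Λ₁ f)
      · exact norm_fst_le (T.prod Λ₁ f)
    _ = (1 + B) * ‖T.prod Λ₁ f‖ ^ 2 := by ring
  rw [Real.coe_toNNReal _ (Real.sqrt_nonneg _)]
  refine le_of_sq_le_sq ?_ (by positivity)
  rwa [mul_pow, Real.sq_sqrt (by positivity), div_mul_eq_mul_div, le_div_iff₀' hA]

end IsGFrame

theorem stmt_12_general {H K : Type*} [NormedAddCommGroup H] [InnerProductSpace ℂ H]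
    [NormedAddCommGroup K] [InnerProductSpace ℂ K] (hH : ¬ FiniteDimensional ℂ H)
    {Λ₁ : H →L[ℂ] K} (hΛ₁ : IsCompactOperator Λ₁) {T : H →L[ℂ] H} {A B : ℝ}
    (hframe : IsGFrame (fun n => Λ₁.comp (T ^ n)) A B) :
    ¬ IsCompactOperator T := by
  intro hT
  have hcompact : IsCompactOperator (T.prod Λ₁) := isCompactOperator_prodMk hT hΛ₁
  have hinducing : IsUniformInducing (T.prod Λ₁) :=
    hframe.antilipschitzWith_prod.isUniformInducing (T.prod Λ₁).uniformContinuous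
  exact hH (finiteDimensional_of_isCompactOperator_of_isUniformInducing ℂ hcompact hinducing)

theorem stmt_12 {H K : Type*} [NormedAddCommGroup H] [InnerProductSpace ℂ H]
    [CompleteSpace H] [TopologicalSpace.SeparableSpace H]
    [NormedAddCommGroup K] [InnerProductSpace ℂ K] [CompleteSpace K]
    (hH : ¬ FiniteDimensional ℂ H) [FiniteDimensional ℂ K]
    (Λ₁ : H →L[ℂ] K) (T : H →L[ℂ] H) (A B : ℝ)
    (hframe : IsGFrame (fun n => Λ₁.comp (T ^ n)) A B) :
    ¬ IsCompactOperator (⇑T) := by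
  have : ProperSpace K := FiniteDimensional.proper ℂ K
  exact stmt_12_general hH (isCompactOperator_of_locallyCompactSpace_dom Λ₁) hframe
end

section
/- Let Λ = (Λ_n)_{n∈ℕ} be a family of bounded operators from H to K satisfying the upper g-Riesz condition with bound B, i.e. ‖∑_n Λ_n* g_n‖² ≤ B ∑_n ‖g_n‖² for every finitely supported family (g_n) in K, and let Θ = (Θ_n)_{n∈ℕ} be a family of bounded operators from H to K with β := ∑_{n∈ℕ} ‖Λ_n − Θ_n‖² < ∞. Then for every finitely supported family (g_n)_{n∈ℕ} in K, ‖∑_n Θ_n* g_n‖ ≤ (√β + √B)·(∑_n ‖g_n‖²)^{1/2}. -/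
section SynthesisBound

variable {ι 𝕜 F : Type*} {E : ι → Type*} [NontriviallyNormedField 𝕜]
  [∀ i, SeminormedAddCommGroup (E i)] [∀ i, NormedSpace 𝕜 (E i)]
  [SeminormedAddCommGroup F] [NormedSpace 𝕜 F]

/-- The synthesis map `(gᵢ) ↦ ∑ Tᵢ gᵢ` of a family of operators has `ℓ²`-norm at most `C` on
finitely supported families. The upper g-Riesz condition for `Λ` with bound `B` is the case
`Tᵢ = Λᵢ*`, `C = √B`. A finitely supported family is encoded as an arbitrary family restricted to
a finite set of indices. -/
def HasSynthesisBound (T : ∀ i, E i →L[𝕜] F) (C : ℝ) : Prop :=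
  ∀ (s : Finset ι) (g : ∀ i, E i), ‖∑ i ∈ s, T i (g i)‖ ≤ C * √(∑ i ∈ s, ‖g i‖ ^ 2)

theorem hasSynthesisBound_sqrt_iff {T : ∀ i, E i →L[𝕜] F} {B : ℝ} (hB : 0 ≤ B) :
    HasSynthesisBound T √B ↔ ∀ (s : Finset ι) (g : ∀ i, E i),
      ‖∑ i ∈ s, T i (g i)‖ ^ 2 ≤ B * ∑ i ∈ s, ‖g i‖ ^ 2 := by
  refine forall₂_congr fun s g => ?_
  rw [← Real.sqrt_mul hB, Real.le_sqrt (norm_nonneg _) (by positivity)]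

theorem norm_sum_apply_le_sqrt_mul_sqrt (T : ∀ i, E i →L[𝕜] F) (s : Finset ι) (g : ∀ i, E i) :
    ‖∑ i ∈ s, T i (g i)‖ ≤ √(∑ i ∈ s, ‖T i‖ ^ 2) * √(∑ i ∈ s, ‖g i‖ ^ 2) :=
  calc ‖∑ i ∈ s, T i (g i)‖
      ≤ ∑ i ∈ s, ‖T i‖ * ‖g i‖ := norm_sum_le_of_le s fun i _ => (T i).le_opNorm (g i)
    _ ≤ √(∑ i ∈ s, ‖T i‖ ^ 2) * √(∑ i ∈ s, ‖g i‖ ^ 2) := Real.sum_mul_le_sqrt_mul_sqrt s _ _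

theorem hasSynthesisBound_sqrt_tsum {T : ∀ i, E i →L[𝕜] F} (hT : Summable fun i => ‖T i‖ ^ 2) :
    HasSynthesisBound T √(∑' i, ‖T i‖ ^ 2) := by
  intro s g
  refine (norm_sum_apply_le_sqrt_mul_sqrt T s g).trans ?_
  gcongr
  exact hT.sum_le_tsum s fun i _ => sq_nonneg ‖T i‖

theorem HasSynthesisBound.sub {S T : ∀ i, E i →L[𝕜] F} {C D : ℝ}
    (hS : HasSynthesisBound S C) (hT : HasSynthesisBound T D) :
    HasSynthesisBound (S - T) (C + D) := by
  intro s g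
  simp only [Pi.sub_apply, sub_apply, Finset.sum_sub_distrib, add_mul]
  exact norm_sub_le_of_le (hS s g) (hT s g)

theorem stmt_15_general (S T : ∀ i, E i →L[𝕜] F) {B : ℝ} (hB : 0 ≤ B)
    (hupper : ∀ (s : Finset ι) (g : ∀ i, E i),
      ‖∑ i ∈ s, S i (g i)‖ ^ 2 ≤ B * ∑ i ∈ s, ‖g i‖ ^ 2)
    (hβ : Summable fun i => ‖S i - T i‖ ^ 2) (s : Finset ι) (g : ∀ i, E i) :
    ‖∑ i ∈ s, T i (g i)‖ ≤
      (√(∑' i, ‖S i - T i‖ ^ 2) + √B) * √(∑ i ∈ s, ‖g i‖ ^ 2) := by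
  have hS : HasSynthesisBound S √B := (hasSynthesisBound_sqrt_iff hB).2 hupper
  have hST : HasSynthesisBound (S - T) √(∑' i, ‖S i - T i‖ ^ 2) := hasSynthesisBound_sqrt_tsum hβ
  have hT : HasSynthesisBound T (√(∑' i, ‖S i - T i‖ ^ 2) + √B) := by
    simpa only [sub_sub_cancel, add_comm] using hS.sub hST
  exact hT s g

end SynthesisBound

theorem stmt_15 {H K : Type*} [NormedAddCommGroup H] [InnerProductSpace ℂ H]
    [CompleteSpace H] [TopologicalSpace.SeparableSpace H]
    [NormedAddCommGroup K] [InnerProductSpace ℂ K]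
    [CompleteSpace K] [TopologicalSpace.SeparableSpace K]
    (Λ Θ : ℕ → H →L[ℂ] K) (B : ℝ) (hB : 0 < B)
    (hupper : ∀ (s : Finset ℕ) (g : ℕ → K),
      ‖∑ n ∈ s, (Λ n).adjoint (g n)‖ ^ 2 ≤ B * ∑ n ∈ s, ‖g n‖ ^ 2)
    (hβ : Summable (fun n => ‖Λ n - Θ n‖ ^ 2)) :
    ∀ (s : Finset ℕ) (g : ℕ → K),
      ‖∑ n ∈ s, (Θ n).adjoint (g n)‖ ≤
        (Real.sqrt (∑' n, ‖Λ n - Θ n‖ ^ 2) + Real.sqrt B) *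
          Real.sqrt (∑ n ∈ s, ‖g n‖ ^ 2) := by
  simp only [← LinearIsometryEquiv.norm_map ContinuousLinearMap.adjoint (Λ _ - Θ _), map_sub]
    at hβ ⊢
  exact stmt_15_general (fun n => (Λ n).adjoint) (fun n => (Θ n).adjoint) hB.le hupper hβ
end
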